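/- Fix 0 < ε < 1 small enough and 2 ≤ σ ≤ k. Then the limit G^σ = lim_{t→0} G_{λ^σ(t)z} exists and is a k-dimensional subgroup of GL(k,ℂ) contained in the stabiliser of z_{λ^σ}, and G^σ contains a (k−1)-dimensional subgroup of the standard maximal unipotent subgroup of SL(k,ℂ) (the upper triangular matrices with 1's on the diagonal). -/

import Mathlib

open scoped BigOperators ENNReal

namespace JetPaper

/-- Monomials in `n` variables of degree between `1` and `k`:
these index the standard basis of `Sym^{≤k}ℂ^n = ⊕_{l=1}^k Sym^l ℂ^n`. -/
def Mon (n k : ℕ) : Type := {m : Fin n → ℕ // 0 < ∑ i, m i ∧ ∑ i, m i ≤ k}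

noncomputable instance (n k : ℕ) : Fintype (Mon n k) :=
  Fintype.ofInjective
    (fun m : Mon n k => (fun i => (⟨m.1 i, Nat.lt_succ_of_le
        ((Finset.single_le_sum (fun _ _ => Nat.zero_le _) (Finset.mem_univ i)).trans
          m.2.2)⟩ : Fin (k + 1))))
    (fun _ _ h => Subtype.ext (funext fun i => congrArg Fin.val (congrFun h i)))

/-- The matrix coefficient of the `GL(n)`-action on `Sym^{≤k}ℂ^n` induced by the standard
action on `ℂ^n` (`g·e_i = ∑_j g_{ji} e_j`), in the monomial basis:
`symMat g m m'` is the coefficient of the monomial `m` in the image of the monomial `m'`. -/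
noncomputable def symMat {n k : ℕ} (g : Matrix (Fin n) (Fin n) ℂ) (m m' : Mon n k) : ℂ :=
  MvPolynomial.coeff (Finsupp.equivFunOnFinite.symm m.1)
    (∏ i : Fin n, (∑ j : Fin n, g j i • MvPolynomial.X j) ^ (m'.1 i))

/-- The induced action of `g ∈ GL(n)` on `(Sym^{≤k}ℂ^n)^{⊗k}`, in coordinates.
Elements of the `k`-th tensor power of `Sym^{≤k}ℂ^n` are recorded by their coordinates
in the basis indexed by `k`-tuples of monomials; `⋀^k(Sym^{≤k}ℂ^n)` is realised inside the
tensor power as the space of antisymmetric tensors. -/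
noncomputable def actV {n k : ℕ} (g : Matrix (Fin n) (Fin n) ℂ)
    (T : (Fin k → Mon n k) → ℂ) : (Fin k → Mon n k) → ℂ :=
  fun mf => ∑ mf' : Fin k → Mon n k, (∏ i, symMat g (mf i) (mf' i)) * T mf'

/-- The wedge product `v₁ ∧ ⋯ ∧ v_k` of `k` elements of `Sym^{≤k}ℂ^n`, realised as an
antisymmetric tensor in `(Sym^{≤k}ℂ^n)^{⊗k}` (in coordinates). -/
noncomputable def wedge {n k : ℕ} (v : Fin k → (Mon n k → ℂ)) : (Fin k → Mon n k) → ℂ :=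
  fun mf => ∑ σ : Equiv.Perm (Fin k), ((Equiv.Perm.sign σ : ℤ) : ℂ) * ∏ i, v (σ i) (mf i)

/-- The `j`-th coordinate polynomial of `φ(γ) ∈ Hom(ℂ^k, Sym^{≤k}ℂ^n)` for
`γ ∈ Hom(ℂ^k, ℂ^n)`: the sum over all `s ≥ 1` and all ordered `s`-tuples `(i₁,…,i_s)` of
positive integers with `i₁+⋯+i_s = j` of the product (in the symmetric algebra,
realised as the polynomial ring in `n` variables) of the `i₁`-th, …, `i_s`-th columns
of `γ`.  A tuple of length `s = l+1` is recorded as a function `a : Fin (l+1) → Fin k`,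
the value `a t` standing for the positive integer `(a t) + 1`. -/
noncomputable def colPoly {n k : ℕ} (γ : Matrix (Fin n) (Fin k) ℂ) (j : Fin k) :
    MvPolynomial (Fin n) ℂ :=
  ∑ l : Fin k, ∑ a : Fin (l.val + 1) → Fin k,
    if (∑ t, ((a t).val + 1)) = j.val + 1 then
      ∏ t, (∑ i : Fin n, γ i (a t) • MvPolynomial.X i)
    else 0

/-- The map `φ : Hom(ℂ^k,ℂ^n) → Hom(ℂ^k, Sym^{≤k}ℂ^n)` as a matrix in the monomial basis:
rows are indexed by monomials, columns by `Fin k`. -/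
noncomputable def phiMat {n k : ℕ} (γ : Matrix (Fin n) (Fin k) ℂ) :
    Matrix (Mon n k) (Fin k) ℂ :=
  fun m j => MvPolynomial.coeff (Finsupp.equivFunOnFinite.symm m.1) (colPoly γ j)

/-- `φ^{Proj}` at the level of vectors: the wedge `φ(γ)e₁ ∧ ⋯ ∧ φ(γ)e_k` of the columns of
`φ(γ)`, an element of `⋀^k(Sym^{≤k}ℂ^n)` in coordinates. -/
noncomputable def wedgePhi {n k : ℕ} (γ : Matrix (Fin n) (Fin k) ℂ) :
    (Fin k → Mon n k) → ℂ :=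
  wedge (fun j m => phiMat γ m j)

/-- The matrix of the reparametrization jet with parameters `α = (α₁,…,α_k)`
(`α_s` is recorded as `α ⟨s-1⟩`): the `(i,j)` entry is
`∑_{s₁+⋯+s_i = j, s_l ≥ 1} α_{s₁}⋯α_{s_i}` (rows and columns of `Fin k` represent
the integers `1,…,k`). -/
noncomputable def repMat (k : ℕ) (α : Fin k → ℂ) : Matrix (Fin k) (Fin k) ℂ :=
  fun i j => ∑ a : Fin (i.val + 1) → Fin k,
    if (∑ t, ((a t).val + 1)) = j.val + 1 then ∏ t, α (a t) else 0

/-- The reparametrization group `𝔾_k ⊂ GL(k,ℂ)`. -/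
def Gset (k : ℕ) : Set (Matrix (Fin k) (Fin k) ℂ) :=
  {g | ∃ α : Fin k → ℂ, (∀ i : Fin k, i.val = 0 → α i ≠ 0) ∧ g = repMat k α}

/-- The unipotent radical `𝕌_k ⊂ 𝔾_k`: the matrices `repMat k α` with `α₁ = 1`. -/
def Uset (k : ℕ) : Set (Matrix (Fin k) (Fin k) ℂ) :=
  {g | ∃ α : Fin k → ℂ, (∀ i : Fin k, i.val = 0 → α i = 1) ∧ g = repMat k α}

/-- The distinguished point
`p_k = e₁ ∧ (e₂ + e₁²) ∧ ⋯ ∧ (∑_{i₁+⋯+i_s = k} e_{i₁}⋯e_{i_s}) ∈ ⋀^k(Sym^{≤k}ℂ^k)`,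
i.e. the wedge of the columns of `φ(1)`. -/
noncomputable def pkVec (k : ℕ) : (Fin k → Mon k k) → ℂ :=
  wedgePhi (1 : Matrix (Fin k) (Fin k) ℂ)


/-- Coordinates on `⋀^k(Sym^{≤k}ℂ^k)`, realised inside `(Sym^{≤k}ℂ^k)^{⊗k}`. -/
abbrev Vk (k : ℕ) : Type := (Fin k → Mon k k) → ℂ

/-- The diagonal transformation `ν(t) : e_i ↦ t^{ν_i} e_i` (for a tuple of reals
`ν = (ν₁,…,ν_k)` and `t > 0`) acting on `⋀^k(Sym^{≤k}ℂ^k)`: a monomial `m` is scaled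
by `t^{∑_j ν_j m_j}`. -/
noncomputable def nuAct {k : ℕ} (ν : Fin k → ℝ) (t : ℝ) (T : Vk k) : Vk k :=
  fun mf => ((∏ i, t ^ (∑ j : Fin k, ν j * ((mf i).1 j : ℝ)) : ℝ) : ℂ) * T mf

/-- The weights `λ^σ_i = i − ⌊i/σ⌋ε` (`1`-based index `i`). -/
noncomputable def lamW (ε : ℝ) (σ i : ℕ) : ℝ := (i : ℝ) - ((i / σ : ℕ) : ℝ) * ε

/-- The one-parameter family `λ^σ`, as a tuple of weights on `Fin k`
(the index `i : Fin k` represents the integer `i+1`). -/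
noncomputable def lamS (k : ℕ) (ε : ℝ) (σ : ℕ) : Fin k → ℝ :=
  fun i => lamW ε σ ((i : ℕ) + 1)

/-- The one-parameter family `μ^σ`: `μ^σ_i = i` for `i ≠ σ` and `μ^σ_σ = σ + ε`. -/
noncomputable def muS (k : ℕ) (ε : ℝ) (σ : ℕ) : Fin k → ℝ :=
  fun i => if (i : ℕ) + 1 = σ then (σ : ℝ) + ε else ((i : ℕ) + 1 : ℝ)

/-- `z_{λ^σ}[i] ∈ Sym^{≤k}ℂ^k`: the sum, over all ordered tuples `(i₁,…,i_s)` of positive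
integers with `i₁+⋯+i_s = i` and `⌊i₁/σ⌋+⋯+⌊i_s/σ⌋ = ⌊i/σ⌋`, of `e_{i₁}⋯e_{i_s}`.
In coordinates: the coefficient of a monomial `m` is the number of such ordered tuples
whose product is `m`, i.e. the multinomial coefficient of `m`, when `m` has weight `i`
and defect `⌊i/σ⌋`, and `0` otherwise. -/
noncomputable def zLamPart (k σ i : ℕ) : Mon k k → ℂ :=
  fun m =>
    if (∑ j : Fin k, ((j : ℕ) + 1) * m.1 j) = i ∧
        (∑ j : Fin k, (((j : ℕ) + 1) / σ) * m.1 j) = i / σ then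
      (Nat.multinomial Finset.univ m.1 : ℂ)
    else 0

/-- `z_{μ^σ}[i] ∈ Sym^{≤k}ℂ^k`: the sum, over all ordered tuples `(i₁,…,i_s)` of positive
integers with `i₁+⋯+i_s = i` and no entry equal to `σ`, of `e_{i₁}⋯e_{i_s}`. -/
noncomputable def zMuPart (k σ i : ℕ) : Mon k k → ℂ :=
  fun m =>
    if (∑ j : Fin k, ((j : ℕ) + 1) * m.1 j) = i ∧
        (∀ j : Fin k, (j : ℕ) + 1 = σ → m.1 j = 0) then
      (Nat.multinomial Finset.univ m.1 : ℂ)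
    else 0

/-- The vector `z_{λ^σ}[1] ∧ ⋯ ∧ z_{λ^σ}[k] ∈ ⋀^k(Sym^{≤k}ℂ^k)`. -/
noncomputable def zLamVec (k σ : ℕ) : Vk k := wedge (fun i => zLamPart k σ ((i : ℕ) + 1))

/-- The vector `z_{μ^σ}[1] ∧ ⋯ ∧ z_{μ^σ}[k] ∈ ⋀^k(Sym^{≤k}ℂ^k)`. -/
noncomputable def zMuVec (k σ : ℕ) : Vk k := wedge (fun i => zMuPart k σ ((i : ℕ) + 1))

/-- `w` represents the limit point `z_ν = lim_{t→0} ν(t)·[p_k]` in `ℙ(⋀^k(Sym^{≤k}ℂ^k))`: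
for a suitable normalising exponent `e`, the rescaled vectors `t^{-e}·ν(t)·p_k`
converge to `w` as `t → 0⁺`. -/
noncomputable def IsProjLimit {k : ℕ} (ν : Fin k → ℝ) (w : Vk k) : Prop :=
  ∃ e : ℝ, Filter.Tendsto (fun t : ℝ => ((t ^ (-e) : ℝ) : ℂ) • nuAct ν t (pkVec k))
    (nhdsWithin 0 (Set.Ioi 0)) (nhds w)

/-- `n_i^σ = max_{1 ≤ j ≤ k−i+1} (λ^σ_{j+i−1} − λ^σ_j)`. -/
noncomputable def nmax (k : ℕ) (ε : ℝ) (σ i : ℕ) : ℝ :=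
  Finset.sup' (Finset.Icc 1 (k - i + 1)) ⟨1, Finset.mem_Icc.mpr (by omega)⟩
    (fun j => lamW ε σ (j + i - 1) - lamW ε σ j)

/-- The matrix `G_{λ^σ(t)z}` after the substitution `α_i = t^{n_i^σ} β_i`: its `(i,j)`
entry is `t^{λ^σ_i − λ^σ_j} p_{i,j}(t^{n^σ}β)` (indices of `Fin k` represent `1,…,k`). -/
noncomputable def Gent (k : ℕ) (ε : ℝ) (σ : ℕ) (t : ℝ) (β : Fin k → ℂ) :
    Matrix (Fin k) (Fin k) ℂ :=
  fun i j => ((t ^ (lamW ε σ ((i : ℕ) + 1) - lamW ε σ ((j : ℕ) + 1)) : ℝ) : ℂ) *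
    repMat k (fun l => ((t ^ nmax k ε σ ((l : ℕ) + 1) : ℝ) : ℂ) * β l) i j

/-- The identity matrix as a function `Fin k → Fin k → ℂ`. -/
def idFun (k : ℕ) : Fin k → Fin k → ℂ := fun i j => if i = j then 1 else 0

/-!
Conjugation by `t^μ` multiplies the term `α_{a_1}⋯α_{a_i}` of the `(i,j)` entry of the stabiliser
by `t^{μ_i - μ_j}`, and the substitution `α_l = t^{ν_l} β_l` turns this into
`t^{ν_{a_1} + ⋯ + ν_{a_i} - (μ_j - μ_i)} β_{a_1}⋯β_{a_i}`. The gap `μ_j - μ_i` telescopes into gaps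
of lengths `a_1 - 1, …, a_i - 1`, each bounded by the maximal gap of that length, so every exponent
is nonnegative: the limit exists and keeps exactly the terms of exponent zero. The composition law
of jets, and the identity expressing that jets act on the columns of `φ(1)` by the matrix of the
jet, hold for all `t > 0` and hence pass to the limit.

For the dimension, each maximal gap `ν_l` is attained at some entry of the matrix. In the limit this
entry is affine in `β_l`, with slope a multiple of a power of `β_1`, and otherwise involves only
`β_i` with `i < l`. Reading off these entries is therefore a Lipschitz map that inverts the
parametrisation by `β`, up to a triangular substitution.
-/

section JetPolynomial

open Polynomial

variable {R S : Type*} [CommRing R] [CommRing S] {k : ℕ}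

/-- The `k`-jet `α₁X + ⋯ + α_kX^k` of a map fixing the origin; `α_s` is recorded as
`α ⟨s-1⟩`. -/
noncomputable def jetPoly (α : Fin k → R) : R[X] := ∑ s : Fin k, C (α s) * X ^ ((s : ℕ) + 1)

lemma jetPoly_eq_X_mul (α : Fin k → R) : jetPoly α = X * ∑ s : Fin k, C (α s) * X ^ (s : ℕ) := by
  simp only [jetPoly, Finset.mul_sum]
  exact Finset.sum_congr rfl fun s _ => by ring

@[simp]
lemma coeff_zero_jetPoly (α : Fin k → R) : (jetPoly α).coeff 0 = 0 := by
  rw [jetPoly_eq_X_mul, coeff_X_mul_zero]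

lemma coeff_sum_C_mul_X_pow (α : Fin k → R) (j : Fin k) :
    (∑ s : Fin k, C (α s) * X ^ (s : ℕ)).coeff j = α j := by
  simp [finsetSum_coeff, coeff_C_mul, coeff_X_pow, Fin.val_inj]

lemma coeff_zero_sum_C_mul_X_pow [NeZero k] (α : Fin k → R) :
    (∑ s : Fin k, C (α s) * X ^ (s : ℕ)).coeff 0 = α 0 :=
  coeff_sum_C_mul_X_pow α 0

@[simp]
lemma coeff_jetPoly (α : Fin k → R) (j : Fin k) : (jetPoly α).coeff ((j : ℕ) + 1) = α j := by
  rw [jetPoly_eq_X_mul, coeff_X_mul, coeff_sum_C_mul_X_pow]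

lemma map_jetPoly (φ : R →+* S) (α : Fin k → R) :
    (jetPoly α).map φ = jetPoly fun s => φ (α s) := by
  simp [jetPoly, Polynomial.map_sum]

lemma coeff_jetPoly_pow (α : Fin k → R) (n j : ℕ) :
    (jetPoly α ^ n).coeff j =
      ∑ a : Fin n → Fin k, if ∑ t, ((a t : ℕ) + 1) = j then ∏ t, α (a t) else 0 := by
  rw [← Fin.prod_const, jetPoly, Finset.prod_univ_sum, finsetSum_coeff, Fintype.piFinset_univ]
  refine Finset.sum_congr rfl fun a _ => ?_
  rw [Finset.prod_mul_distrib, Finset.prod_pow_eq_pow_sum, ← map_prod, coeff_C_mul_X_pow]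
  simp only [eq_comm]

lemma coeff_pow_eq_zero_of_lt {f : R[X]} (hf : f.coeff 0 = 0) {n j : ℕ} (h : j < n) :
    (f ^ n).coeff j = 0 :=
  X_pow_dvd_iff.mp (pow_dvd_pow_of_dvd (X_dvd_iff.mpr hf) n) j h

lemma coeff_comp_eq_sum {F f : R[X]} (hF : F.coeff 0 = 0) (hf : f.coeff 0 = 0) (j : Fin k) :
    (F.comp f).coeff ((j : ℕ) + 1) =
      ∑ i : Fin k, F.coeff ((i : ℕ) + 1) * (f ^ ((i : ℕ) + 1)).coeff ((j : ℕ) + 1) := by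
  rw [comp, eval₂_eq_sum_range' _ (n := F.natDegree + k + 1) (by omega), finsetSum_coeff,
    Finset.sum_range_succ', Fin.sum_univ_eq_sum_range
      (fun i => F.coeff (i + 1) * (f ^ (i + 1)).coeff ((j : ℕ) + 1)) k]
  simp only [coeff_C_mul, hF, zero_mul, add_zero]
  refine (Finset.sum_subset (Finset.range_mono (by omega)) fun i _ hi => ?_).symm
  rw [coeff_pow_eq_zero_of_lt hf (by have := Finset.mem_range.not.mp hi; omega), mul_zero]

lemma coeff_comp_zero {F f : R[X]} (hF : F.coeff 0 = 0) (hf : f.coeff 0 = 0) :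
    (F.comp f).coeff 0 = 0 := by
  rw [coeff_zero_eq_eval_zero, eval_comp, ← coeff_zero_eq_eval_zero f, hf,
    ← coeff_zero_eq_eval_zero, hF]

lemma coeff_pow_congr {F G : R[X]} (h₀ : F.coeff 0 = G.coeff 0)
    (h : ∀ j : Fin k, F.coeff ((j : ℕ) + 1) = G.coeff ((j : ℕ) + 1)) (n : ℕ) (j : Fin k) :
    (F ^ n).coeff ((j : ℕ) + 1) = (G ^ n).coeff ((j : ℕ) + 1) := by
  have hdvd : X ^ (k + 1) ∣ F - G := X_pow_dvd_iff.mpr fun d hd => by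
    rw [coeff_sub, sub_eq_zero]
    cases d with
    | zero => exact h₀
    | succ d => exact h ⟨d, by omega⟩
  have hpow := X_pow_dvd_iff.mp (hdvd.trans (sub_dvd_pow_sub_pow F G n)) _
    (Nat.succ_lt_succ j.isLt)
  rwa [coeff_sub, sub_eq_zero] at hpow

lemma coeff_add_monomial_pow (g : R[X]) (x : R) {l : ℕ} (hl : 0 < l) (n : ℕ) :
    ((g + C x * X ^ l) ^ n).coeff l = (g ^ n).coeff l + n * g.coeff 0 ^ (n - 1) * x := by
  obtain ⟨q, hq⟩ := powAddExpansion g (C x * X ^ l) n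
  have hquad : q * (C x * X ^ l) ^ 2 = q * C (x ^ 2) * X ^ (2 * l) := by
    rw [mul_pow, ← pow_mul, ← C_pow, mul_comm l 2, mul_assoc]
  rw [hq, hquad, coeff_add, coeff_add, coeff_mul_X_pow', if_neg (by omega), add_zero,
    ← mul_assoc, coeff_mul_X_pow', if_pos le_rfl, Nat.sub_self, coeff_mul_C, mul_coeff_zero,
    coeff_zero_eq_eval_zero (g ^ _), eval_pow, ← coeff_zero_eq_eval_zero]
  simp

end JetPolynomial

section ReparametrisationMatrix

open Polynomial
open scoped Matrix

variable {k : ℕ}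

lemma repMat_eq_coeff (α : Fin k → ℂ) (i j : Fin k) :
    repMat k α i j = (jetPoly α ^ ((i : ℕ) + 1)).coeff ((j : ℕ) + 1) :=
  (coeff_jetPoly_pow α _ _).symm

-- The rows of `repMat k α` are the powers of the jet of `α`, so products are compositions of jets.
lemma repMat_mul (α β : Fin k → ℂ) :
    repMat k α * repMat k β = repMat k (α ᵥ* repMat k β) := by
  ext i j
  have hjet (l : Fin k) : ((jetPoly α).comp (jetPoly β)).coeff ((l : ℕ) + 1) =
      (jetPoly (α ᵥ* repMat k β)).coeff ((l : ℕ) + 1) := by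
    simp only [coeff_comp_eq_sum (coeff_zero_jetPoly α) (coeff_zero_jetPoly β), coeff_jetPoly,
      ← repMat_eq_coeff, Matrix.vecMul, dotProduct]
  have hzero : ((jetPoly α).comp (jetPoly β)).coeff 0 = (jetPoly (α ᵥ* repMat k β)).coeff 0 := by
    simp [coeff_comp_zero]
  rw [repMat_eq_coeff, ← coeff_pow_congr hzero hjet, ← pow_comp, coeff_comp_eq_sum
    (coeff_pow_eq_zero_of_lt (coeff_zero_jetPoly α) i.val.succ_pos) (coeff_zero_jetPoly β)]
  simp only [Matrix.mul_apply, repMat_eq_coeff]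

lemma repMat_apply_eq_zero_of_lt (α : Fin k → ℂ) {i j : Fin k} (h : j < i) :
    repMat k α i j = 0 := by
  rw [repMat_eq_coeff]
  exact coeff_pow_eq_zero_of_lt (coeff_zero_jetPoly α) (Nat.succ_lt_succ h)

lemma repMat_apply_self [NeZero k] (α : Fin k → ℂ) (i : Fin k) :
    repMat k α i i = α 0 ^ ((i : ℕ) + 1) := by
  rw [repMat_eq_coeff, jetPoly_eq_X_mul, mul_pow, coeff_X_pow_mul', if_pos le_rfl, Nat.sub_self,
    coeff_zero_eq_eval_zero, eval_pow, ← coeff_zero_eq_eval_zero, coeff_zero_sum_C_mul_X_pow]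

lemma repMat_single_zero [NeZero k] : repMat k (Pi.single 0 1) = 1 := by
  have hjet : jetPoly (Pi.single 0 1 : Fin k → ℂ) = X := by
    rw [jetPoly, Finset.sum_eq_single 0] <;> simp +contextual
  ext i j
  rw [repMat_eq_coeff, hjet, coeff_X_pow, Matrix.one_apply]
  simp only [Nat.add_right_cancel_iff, Fin.val_inj, eq_comm]

lemma repMat_update_apply [NeZero k] (α : Fin k → ℂ) {l r c : Fin k} (hl : l ≠ 0)
    (hc : (c : ℕ) = r + l) (x : ℂ) :
    repMat k (Function.update α l x) r c =
      repMat k α r c + ((r : ℕ) + 1) * α 0 ^ (r : ℕ) * (x - α l) := by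
  have hsum : ∑ s : Fin k, C (Function.update α l x s) * X ^ (s : ℕ) =
      (∑ s : Fin k, C (α s) * X ^ (s : ℕ)) + C (x - α l) * X ^ (l : ℕ) := by
    rw [← Finset.add_sum_erase _ _ (Finset.mem_univ l),
      ← Finset.add_sum_erase _ (fun s => C (α s) * X ^ (s : ℕ)) (Finset.mem_univ l),
      Finset.sum_congr rfl fun s hs => by
        rw [Function.update_of_ne (Finset.ne_of_mem_erase hs)], Function.update_self, C_sub]
    ring
  have hcoeff (g : ℂ[X]) : ((X * g) ^ ((r : ℕ) + 1)).coeff ((c : ℕ) + 1) =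
      (g ^ ((r : ℕ) + 1)).coeff l := by
    rw [mul_pow, hc, show (r : ℕ) + l + 1 = l + (r + 1) by omega, coeff_X_pow_mul]
  rw [repMat_eq_coeff, repMat_eq_coeff, jetPoly_eq_X_mul, jetPoly_eq_X_mul, hcoeff, hcoeff, hsum,
    coeff_add_monomial_pow _ _ (Fin.pos_iff_ne_zero.mpr hl),
    coeff_zero_sum_C_mul_X_pow]
  simp

end ReparametrisationMatrix

section LimitMatrix

open Filter Topology
open scoped Matrix

variable {k : ℕ}

/-- `ν` bounds the gaps of the weight `μ`: raising the index by `l` raises `μ` by at most `ν l`. -/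
def IsGapBound (μ ν : Fin k → ℝ) : Prop :=
  ∀ ⦃i j l : Fin k⦄, (j : ℕ) = i + l → μ j - μ i ≤ ν l

/-- `ν l` is the largest gap `μ j - μ i` with `j = i + l`; for `μ = λ^σ` these are the exponents
`n^σ_{l+1}`. -/
def IsMaxGap (μ ν : Fin k → ℝ) : Prop :=
  ∀ l : Fin k, IsGreatest {x | ∃ i j : Fin k, (j : ℕ) = i + l ∧ x = μ j - μ i} (ν l)

/-- The matrix of the jet with parameters `t^ν·β`, conjugated by the diagonal matrix `t^μ`. -/
noncomputable def rescaledRepMat (μ ν : Fin k → ℝ) (t : ℝ) (β : Fin k → ℂ) :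
    Matrix (Fin k) (Fin k) ℂ :=
  fun i j => ((t ^ (μ i - μ j) : ℝ) : ℂ) * repMat k (fun l => ((t ^ ν l : ℝ) : ℂ) * β l) i j

open Classical in
/-- The limit of `rescaledRepMat μ ν t β` as `t → 0`: the part of `repMat k β` in which the weights
`ν` of a tuple telescope to the gap `μ j - μ i`. -/
noncomputable def limitRepMat (μ ν : Fin k → ℝ) (β : Fin k → ℂ) : Matrix (Fin k) (Fin k) ℂ :=
  fun i j => ∑ a : Fin ((i : ℕ) + 1) → Fin k,
    if ∑ t, ((a t : ℕ) + 1) = j + 1 ∧ ∑ t, ν (a t) = μ j - μ i then ∏ t, β (a t) else 0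

variable {μ ν : Fin k → ℝ} {β : Fin k → ℂ}

lemma IsMaxGap.isGapBound (hν : IsMaxGap μ ν) : IsGapBound μ ν :=
  fun i j l h => (hν l).2 ⟨i, j, h, rfl⟩

lemma IsMaxGap.apply_zero [NeZero k] (hν : IsMaxGap μ ν) : ν 0 = 0 := by
  obtain ⟨i, j, hij, h⟩ := (hν 0).1
  have : j = i := Fin.ext (by simpa using hij)
  simpa [this] using h

lemma IsMaxGap.self [NeZero k] (hν : IsMaxGap μ ν) : IsMaxGap ν ν := by
  refine fun l => ⟨⟨0, l, by simp, by rw [hν.apply_zero, sub_zero]⟩, ?_⟩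
  rintro _ ⟨i, j, hij, rfl⟩
  obtain ⟨r, c, hc, hj⟩ := (hν j).1
  let d : Fin k := ⟨r + i, by omega⟩
  have hi : μ d - μ r ≤ ν i := hν.isGapBound rfl
  have hl : μ c - μ d ≤ ν l := hν.isGapBound (show (c : ℕ) = r + i + l by omega)
  linarith

lemma IsGapBound.sub_le_sum (h : IsGapBound μ ν) {n : ℕ} (a : Fin n → Fin k) {i j : Fin k}
    (hj : (j : ℕ) = i + ∑ t, (a t : ℕ)) : μ j - μ i ≤ ∑ t, ν (a t) := by
  induction n generalizing j with
  | zero => simp [show j = i from Fin.ext (by simpa using hj)]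
  | succ n ih =>
    rw [Fin.sum_univ_castSucc] at hj ⊢
    let d : Fin k := ⟨i + ∑ t : Fin n, (a t.castSucc : ℕ), by omega⟩
    have hlast : μ j - μ d ≤ ν (a (Fin.last n)) := h (show (j : ℕ) = i + _ + _ by omega)
    linarith [ih (fun t => a t.castSucc) (j := d) rfl]

lemma sum_add_one_eq_iff {i j : ℕ} (a : Fin (i + 1) → Fin k) :
    ∑ t, ((a t : ℕ) + 1) = j + 1 ↔ j = i + ∑ t, (a t : ℕ) := by
  simp only [Finset.sum_add_distrib, Finset.sum_const, Finset.card_univ, Fintype.card_fin,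
    smul_eq_mul, mul_one]
  omega

lemma tendsto_ofReal_rpow_nhdsGT_zero {e : ℝ} (he : 0 ≤ e) [Decidable (e = 0)] :
    Tendsto (fun t : ℝ => ((t ^ e : ℝ) : ℂ)) (𝓝[>] 0) (𝓝 (if e = 0 then 1 else 0)) := by
  have h := (Complex.continuous_ofReal.comp (Real.continuous_rpow_const he)).tendsto 0
  have h0 : (((0 : ℝ) ^ e : ℝ) : ℂ) = if e = 0 then 1 else 0 := by
    split_ifs with he0 <;> simp [he0]
  rw [← h0]
  exact h.mono_left nhdsWithin_le_nhds

lemma rescaledRepMat_apply {t : ℝ} (ht : 0 < t) (i j : Fin k) :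
    rescaledRepMat μ ν t β i j = ∑ a : Fin ((i : ℕ) + 1) → Fin k,
      if ∑ s, ((a s : ℕ) + 1) = j + 1 then
        ((t ^ (∑ s, ν (a s) - (μ j - μ i)) : ℝ) : ℂ) * ∏ s, β (a s) else 0 := by
  rw [rescaledRepMat, repMat, Finset.mul_sum]
  refine Finset.sum_congr rfl fun a _ => ?_
  rw [mul_ite, mul_zero, Finset.prod_mul_distrib, ← mul_assoc, ← Complex.ofReal_prod,
    ← Complex.ofReal_mul, ← Real.rpow_sum_of_pos ht, ← Real.rpow_add ht]
  ring_nf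

lemma tendsto_rescaledRepMat (h : IsGapBound μ ν) {b : ℝ → Fin k → ℂ}
    (hb : Tendsto b (𝓝[>] 0) (𝓝 β)) :
    Tendsto (fun t => rescaledRepMat μ ν t (b t)) (𝓝[>] 0) (𝓝 (limitRepMat μ ν β)) := by
  refine tendsto_pi_nhds.mpr fun i => tendsto_pi_nhds.mpr fun j => ?_
  refine Tendsto.congr' (eventually_mem_nhdsWithin.mono fun t ht =>
    (rescaledRepMat_apply ht i j).symm) (tendsto_finsetSum _ fun a _ => ?_)
  by_cases ha : ∑ s, ((a s : ℕ) + 1) = j + 1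
  · have hexp : 0 ≤ ∑ s, ν (a s) - (μ j - μ i) :=
      sub_nonneg.mpr (h.sub_le_sum a ((sum_add_one_eq_iff a).mp ha))
    classical
    have hlim := (tendsto_ofReal_rpow_nhdsGT_zero hexp).mul
      (tendsto_finsetProd Finset.univ fun s _ => (tendsto_pi_nhds.mp hb) (a s))
    simpa only [ha, if_true, true_and, sub_eq_zero, ite_mul, one_mul, zero_mul] using hlim
  · simp only [ha, if_false, false_and, tendsto_const_nhds]

lemma rescaledRepMat_mul {t : ℝ} (ht : 0 < t) (β γ : Fin k → ℂ) :
    rescaledRepMat μ ν t β * rescaledRepMat μ ν t γ =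
      rescaledRepMat μ ν t (β ᵥ* rescaledRepMat ν ν t γ) := by
  have hsub (w : Fin k → ℝ) (i j : Fin k) :
      ((t ^ (w i - w j) : ℝ) : ℂ) = ((t ^ w i : ℝ) : ℂ) / ((t ^ w j : ℝ) : ℂ) := by
    rw [Real.rpow_sub ht, Complex.ofReal_div]
  have hne (x : ℝ) : ((t ^ x : ℝ) : ℂ) ≠ 0 :=
    Complex.ofReal_ne_zero.mpr (Real.rpow_pos_of_pos ht x).ne'
  have hparam : (fun l => ((t ^ ν l : ℝ) : ℂ) * (β ᵥ* rescaledRepMat ν ν t γ) l) =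
      (fun l => ((t ^ ν l : ℝ) : ℂ) * β l) ᵥ* repMat k (fun l => ((t ^ ν l : ℝ) : ℂ) * γ l) := by
    ext l
    simp only [Matrix.vecMul, dotProduct, rescaledRepMat, Finset.mul_sum, hsub]
    exact Finset.sum_congr rfl fun i _ => by field_simp [hne]
  ext i j
  rw [rescaledRepMat.eq_def _ _ _ (_ ᵥ* _), hparam, ← repMat_mul, Matrix.mul_apply,
    Matrix.mul_apply, Finset.mul_sum]
  simp only [rescaledRepMat, hsub]
  exact Finset.sum_congr rfl fun l _ => by field_simp [hne]

lemma limitRepMat_mul [NeZero k] (hν : IsMaxGap μ ν) (β γ : Fin k → ℂ) :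
    limitRepMat μ ν β * limitRepMat μ ν γ = limitRepMat μ ν (β ᵥ* limitRepMat ν ν γ) := by
  have hlim {w : Fin k → ℝ} (hw : IsGapBound w ν) (α : Fin k → ℂ) :
      Tendsto (fun t => rescaledRepMat w ν t α) (𝓝[>] 0) (𝓝 (limitRepMat w ν α)) :=
    tendsto_rescaledRepMat hw tendsto_const_nhds
  have hparam : Tendsto (fun t => β ᵥ* rescaledRepMat ν ν t γ) (𝓝[>] 0)
      (𝓝 (β ᵥ* limitRepMat ν ν γ)) :=
    ((continuous_const.matrix_vecMul continuous_id).tendsto _).comp (hlim hν.self.isGapBound γ)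
  exact tendsto_nhds_unique_of_eventuallyEq
    ((hlim hν.isGapBound β).mul (hlim hν.isGapBound γ))
    (tendsto_rescaledRepMat hν.isGapBound hparam)
    (eventually_mem_nhdsWithin.mono fun t ht => rescaledRepMat_mul ht β γ)

lemma tendsto_rescaledRepMat_apply (h : IsGapBound μ ν) (β : Fin k → ℂ) (i j : Fin k) :
    Tendsto (fun t => rescaledRepMat μ ν t β i j) (𝓝[>] 0) (𝓝 (limitRepMat μ ν β i j)) :=
  tendsto_pi_nhds.mp (tendsto_pi_nhds.mp (tendsto_rescaledRepMat h tendsto_const_nhds) i) j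

lemma limitRepMat_apply_eq_zero_of_lt (h : IsGapBound μ ν) (β : Fin k → ℂ) {i j : Fin k}
    (hij : j < i) : limitRepMat μ ν β i j = 0 := by
  refine tendsto_nhds_unique_of_eventuallyEq (tendsto_rescaledRepMat_apply h β i j)
    tendsto_const_nhds (Eventually.of_forall fun t => ?_)
  simp only [rescaledRepMat, repMat_apply_eq_zero_of_lt _ hij, mul_zero]

lemma limitRepMat_update_of_lt (β : Fin k → ℂ) {r c l : Fin k} (h : (c : ℕ) < r + l) (x : ℂ) :
    limitRepMat μ ν (Function.update β l x) r c = limitRepMat μ ν β r c := by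
  refine Finset.sum_congr rfl fun a _ => ite_congr rfl (fun ha => ?_) fun _ => rfl
  refine Finset.prod_congr rfl fun t _ => Function.update_of_ne (fun hat => ?_) _ _
  have hsum := (sum_add_one_eq_iff a).mp ha.1
  have hle := Finset.single_le_sum (f := fun s => (a s : ℕ)) (fun _ _ => Nat.zero_le _)
    (Finset.mem_univ t)
  simp only [hat] at hle
  omega

lemma limitRepMat_apply_self [NeZero k] (hν : IsMaxGap μ ν) (β : Fin k → ℂ) (i : Fin k) :
    limitRepMat μ ν β i i = β 0 ^ ((i : ℕ) + 1) := by
  refine tendsto_nhds_unique_of_eventuallyEq (tendsto_rescaledRepMat_apply hν.isGapBound β i i)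
    tendsto_const_nhds (Eventually.of_forall fun t => ?_)
  simp [rescaledRepMat, repMat_apply_self, hν.apply_zero]

lemma limitRepMat_single_zero [NeZero k] (hν : IsMaxGap μ ν) :
    limitRepMat μ ν (Pi.single 0 1) = 1 := by
  refine tendsto_nhds_unique_of_eventuallyEq
    (tendsto_rescaledRepMat hν.isGapBound tendsto_const_nhds) tendsto_const_nhds
    (Eventually.of_forall fun t => ?_)
  have hparam : (fun l => ((t ^ ν l : ℝ) : ℂ) * (Pi.single 0 1 : Fin k → ℂ) l) = Pi.single 0 1 := by
    ext l
    rcases eq_or_ne l 0 with rfl | hl <;> simp [hν.apply_zero, *]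
  ext i j
  simp only [rescaledRepMat, hparam, repMat_single_zero]
  rcases eq_or_ne i j with rfl | hij <;> simp [*]

lemma limitRepMat_update_apply [NeZero k] (hν : IsMaxGap μ ν) (β : Fin k → ℂ) {r c l : Fin k}
    (hl : l ≠ 0) (hc : (c : ℕ) = r + l) (hgap : ν l = μ c - μ r) (x : ℂ) :
    limitRepMat μ ν (Function.update β l x) r c =
      limitRepMat μ ν β r c + ((r : ℕ) + 1) * β 0 ^ (r : ℕ) * (x - β l) := by
  refine tendsto_nhds_unique_of_eventuallyEq (tendsto_rescaledRepMat_apply hν.isGapBound _ r c)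
    ((tendsto_rescaledRepMat_apply hν.isGapBound β r c).add tendsto_const_nhds)
    (eventually_mem_nhdsWithin.mono fun t ht => ?_)
  have hparam : (fun s => ((t ^ ν s : ℝ) : ℂ) * Function.update β l x s) =
      Function.update (fun s => ((t ^ ν s : ℝ) : ℂ) * β s) l (((t ^ ν l : ℝ) : ℂ) * x) := by
    ext s
    rcases eq_or_ne s l with rfl | hs <;> simp [*]
  have hcancel : ((t ^ (μ r - μ c) : ℝ) : ℂ) * ((t ^ ν l : ℝ) : ℂ) = 1 := by
    rw [← Complex.ofReal_mul, ← Real.rpow_add ht, hgap]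
    simp
  simp only [rescaledRepMat, hparam, repMat_update_apply _ hl hc, hν.apply_zero, Real.rpow_zero,
    Complex.ofReal_one, one_mul]
  linear_combination ((r : ℕ) + 1) * β 0 ^ (r : ℕ) * (x - β l) * hcancel

end LimitMatrix

section LimitGroup

open scoped Matrix

variable {k : ℕ} [NeZero k] {μ ν : Fin k → ℝ}

/-- The limit of the conjugated stabilisers of `z`, with the diagonal parameter `α₁` restricted to
a subgroup `H` of `ℂˣ`. As in the theorem below, matrices are recorded as functions of two
indices. -/
def limitGroup (μ ν : Fin k → ℝ) (H : Subgroup ℂˣ) : Set (Fin k → Fin k → ℂ) :=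
  limitRepMat μ ν '' {β | ∃ u ∈ H, (u : ℂ) = β 0}

variable {H : Subgroup ℂˣ} {g h : Fin k → Fin k → ℂ}

lemma det_limitRepMat (hν : IsMaxGap μ ν) (β : Fin k → ℂ) :
    (limitRepMat μ ν β).det = ∏ i : Fin k, β 0 ^ ((i : ℕ) + 1) := by
  have htri : (limitRepMat μ ν β).IsUpperTriangular :=
    fun i j hij => limitRepMat_apply_eq_zero_of_lt hν.isGapBound β hij
  rw [Matrix.det_of_isUpperTriangular htri]
  exact Finset.prod_congr rfl fun i _ => limitRepMat_apply_self hν β i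

lemma isUnit_limitRepMat (hν : IsMaxGap μ ν) {β : Fin k → ℂ} (hβ : β 0 ≠ 0) :
    IsUnit (limitRepMat μ ν β) := by
  rw [Matrix.isUnit_iff_isUnit_det, det_limitRepMat hν, isUnit_iff_ne_zero]
  exact Finset.prod_ne_zero_iff.mpr fun i _ => pow_ne_zero _ hβ

lemma vecMul_limitRepMat_zero (hν : IsMaxGap μ ν) (β γ : Fin k → ℂ) :
    (β ᵥ* limitRepMat μ ν γ) 0 = β 0 * γ 0 := by
  rw [Matrix.vecMul, dotProduct, Finset.sum_eq_single 0, limitRepMat_apply_self hν]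
  · simp
  · intro i _ hi
    rw [limitRepMat_apply_eq_zero_of_lt hν.isGapBound γ (Fin.pos_iff_ne_zero.mpr hi), mul_zero]
  · simp

lemma exists_limitRepMat_mul_eq_one (hν : IsMaxGap μ ν) {γ : Fin k → ℂ} (hγ : γ 0 ≠ 0) :
    ∃ β : Fin k → ℂ, β 0 * γ 0 = 1 ∧ limitRepMat μ ν β * limitRepMat μ ν γ = 1 := by
  have hsolve : (Pi.single 0 1 ᵥ* (limitRepMat ν ν γ)⁻¹) ᵥ* limitRepMat ν ν γ = Pi.single 0 1 := by
    rw [Matrix.vecMul_vecMul, Matrix.nonsing_inv_mul _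
      ((Matrix.isUnit_iff_isUnit_det _).mp (isUnit_limitRepMat hν.self hγ)), Matrix.vecMul_one]
  refine ⟨Pi.single 0 1 ᵥ* (limitRepMat ν ν γ)⁻¹, ?_, ?_⟩
  · rw [← vecMul_limitRepMat_zero hν.self, hsolve, Pi.single_eq_same]
  · rw [limitRepMat_mul hν, hsolve, limitRepMat_single_zero hν]

lemma isUnit_of_mem_limitGroup (hν : IsMaxGap μ ν) (hg : g ∈ limitGroup μ ν H) :
    IsUnit (Matrix.of g) := by
  obtain ⟨β, ⟨u, -, hu⟩, rfl⟩ := hg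
  exact isUnit_limitRepMat hν (hu ▸ u.ne_zero)

lemma idFun_mem_limitGroup (hν : IsMaxGap μ ν) : idFun k ∈ limitGroup μ ν H :=
  ⟨Pi.single 0 1, ⟨1, H.one_mem, by simp⟩, by
    rw [limitRepMat_single_zero hν]
    ext i j
    rw [Matrix.one_apply, idFun]⟩

lemma mul_mem_limitGroup (hν : IsMaxGap μ ν) (hg : g ∈ limitGroup μ ν H)
    (hh : h ∈ limitGroup μ ν H) :
    (fun i j => (Matrix.of g * Matrix.of h) i j) ∈ limitGroup μ ν H := by
  obtain ⟨β, ⟨u, hu, hβ⟩, rfl⟩ := hg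
  obtain ⟨γ, ⟨v, hv, hγ⟩, rfl⟩ := hh
  exact ⟨_, ⟨u * v, H.mul_mem hu hv, by
    rw [vecMul_limitRepMat_zero hν.self, Units.val_mul, hβ, hγ]⟩, (limitRepMat_mul hν β γ).symm⟩

lemma inv_mem_limitGroup (hν : IsMaxGap μ ν) (hg : g ∈ limitGroup μ ν H) :
    (fun i j => (Matrix.of g)⁻¹ i j) ∈ limitGroup μ ν H := by
  obtain ⟨γ, ⟨u, hu, hγ⟩, rfl⟩ := hg
  obtain ⟨β, hβγ, hmul⟩ := exists_limitRepMat_mul_eq_one hν (hγ ▸ u.ne_zero)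
  refine ⟨β, ⟨u⁻¹, H.inv_mem hu, ?_⟩, (Matrix.inv_eq_left_inv hmul).symm⟩
  rw [Units.val_inv_eq_inv_val, hγ, eq_inv_of_mul_eq_one_left hβγ]

lemma limitGroup_top_eq (μ ν : Fin k → ℝ) : limitGroup μ ν ⊤ =
    {g | ∃ β : Fin k → ℂ, (∀ i : Fin k, (i : ℕ) = 0 → β i ≠ 0) ∧ g = limitRepMat μ ν β} := by
  ext g
  constructor
  · rintro ⟨β, ⟨u, -, hu⟩, rfl⟩
    exact ⟨β, fun i hi => Fin.val_eq_zero_iff.mp hi ▸ hu ▸ u.ne_zero, rfl⟩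
  · rintro ⟨β, hβ, rfl⟩
    exact ⟨β, ⟨Units.mk0 _ (hβ 0 rfl), trivial, rfl⟩, rfl⟩

end LimitGroup

section LimitGroupDimension

variable {k : ℕ}

lemma contDiff_limitRepMat (μ ν : Fin k → ℝ) :
    ContDiff ℝ 1 fun (β : Fin k → ℂ) (i j : Fin k) => limitRepMat μ ν β i j := by
  refine contDiff_pi.mpr fun i => contDiff_pi.mpr fun j => ContDiff.sum fun a _ => ?_
  split_ifs
  · exact contDiff_prod fun t _ => contDiff_apply ℝ ℂ (a t)
  · exact contDiff_const

lemma lipschitzWith_entries {ι E : Type*} [Fintype ι] [PseudoMetricSpace E] (r c : ι → Fin k) :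
    LipschitzWith 1 fun (M : Fin k → Fin k → E) l => M (r l) (c l) := by
  refine LipschitzWith.of_dist_le_mul fun M N => ?_
  rw [NNReal.coe_one, one_mul, dist_pi_le_iff dist_nonneg]
  exact fun l =>
    (dist_le_pi_dist (M (r l)) (N (r l)) (c l)).trans (dist_le_pi_dist M N (r l))

lemma finrank_real_pi_complex (n : ℕ) : Module.finrank ℝ (Fin n → ℂ) = 2 * n := by
  simp [Module.finrank_pi_fintype, Complex.finrank_real_complex, mul_comm]

lemma dimH_setOf_apply_ne_zero (i : Fin k) :
    dimH {β : Fin k → ℂ | β i ≠ 0} = ((2 * k : ℕ) : ℝ≥0∞) := by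
  have hopen : IsOpen {β : Fin k → ℂ | β i ≠ 0} :=
    isOpen_ne_fun (continuous_apply i) continuous_const
  have hne : (interior {β : Fin k → ℂ | β i ≠ 0}).Nonempty :=
    hopen.interior_eq.symm ▸ ⟨1, one_ne_zero⟩
  rw [Real.dimH_of_nonempty_interior hne, finrank_real_pi_complex]

lemma dimH_setOf_apply_eq (i : Fin k) (x : ℂ) :
    dimH {β : Fin k → ℂ | β i = x} = ((2 * (k - 1) : ℕ) : ℝ≥0∞) := by
  cases k with
  | zero => exact i.elim0
  | succ n =>
    let ι : (Fin n → ℂ) → Fin (n + 1) → ℂ := Fin.insertNth (α := fun _ => ℂ) i x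
    have hisom : Isometry ι := Isometry.of_dist_eq fun f g => by
      have := Fin.dist_insertNth_insertNth (α := fun _ => ℂ) i x x f g
      rwa [dist_self, max_eq_right dist_nonneg] at this
    have himage : {β : Fin (n + 1) → ℂ | β i = x} = ι '' Set.univ := by
      ext β
      refine ⟨?_, ?_⟩
      · rintro rfl
        exact ⟨i.removeNth β, Set.mem_univ _, Fin.insertNth_self_removeNth i β⟩
      · rintro ⟨f, -, rfl⟩
        exact Fin.insertNth_apply_same (α := fun _ => ℂ) i x f
    rw [himage, hisom.dimH_image, Real.dimH_univ_eq_finrank, finrank_real_pi_complex,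
      Nat.add_sub_cancel]

variable [NeZero k] {μ ν : Fin k → ℝ}

lemma IsMaxGap.exists_pivots (hν : IsMaxGap μ ν) :
    ∃ r c : Fin k → Fin k, r 0 = 0 ∧
      ∀ l, (c l : ℕ) = r l + l ∧ ν l = μ (c l) - μ (r l) := by
  have hpivot (l : Fin k) : ∃ p : Fin k × Fin k, (l = 0 → p.1 = 0) ∧
      (p.2 : ℕ) = p.1 + l ∧ ν l = μ p.2 - μ p.1 := by
    rcases eq_or_ne l 0 with rfl | hl
    · exact ⟨(0, 0), by simp [hν.apply_zero]⟩
    · obtain ⟨r, c, hc, hgap⟩ := (hν l).1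
      exact ⟨(r, c), fun h => absurd h hl, hc, hgap⟩
  choose p hp₀ hp using hpivot
  exact ⟨fun l => (p l).1, fun l => (p l).2, hp₀ 0 rfl, hp⟩

-- The equation for the pivot of `l` involves only `β 0, …, β l`, and it is affine in `β l`
-- with nonzero slope.
lemma exists_limitRepMat_pivots_eq (hν : IsMaxGap μ ν) {r c : Fin k → Fin k} (hr₀ : r 0 = 0)
    (hrc : ∀ l, (c l : ℕ) = r l + l ∧ ν l = μ (c l) - μ (r l)) {y : Fin k → ℂ} (hy : y 0 ≠ 0) :
    ∃ β : Fin k → ℂ, β 0 = y 0 ∧ ∀ l, limitRepMat μ ν β (r l) (c l) = y l := by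
  suffices h : ∀ n : ℕ, ∃ β : Fin k → ℂ, β 0 = y 0 ∧
      ∀ l : Fin k, (l : ℕ) ≤ n → limitRepMat μ ν β (r l) (c l) = y l by
    obtain ⟨β, hβ₀, hβ⟩ := h k
    exact ⟨β, hβ₀, fun l => hβ l l.isLt.le⟩
  intro n
  induction n with
  | zero =>
    refine ⟨y, rfl, fun l hl => ?_⟩
    obtain rfl : l = 0 := Fin.ext (by simpa using hl)
    have hc₀ : c 0 = 0 := Fin.ext (by simpa [hr₀] using (hrc 0).1)
    rw [hr₀, hc₀, limitRepMat_apply_self hν]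
    simp
  | succ n ih =>
    obtain ⟨β, hβ₀, hβ⟩ := ih
    by_cases hn : n + 1 < k
    · let m : Fin k := ⟨n + 1, hn⟩
      have hm : m ≠ 0 := fun h => n.succ_ne_zero (congrArg Fin.val h)
      have hslope : (((r m : ℕ) : ℂ) + 1) * β 0 ^ (r m : ℕ) ≠ 0 :=
        mul_ne_zero (Nat.cast_add_one_ne_zero _) (pow_ne_zero _ (hβ₀ ▸ hy))
      refine ⟨Function.update β m (β m + (y m - limitRepMat μ ν β (r m) (c m)) /
        (((r m : ℕ) + 1) * β 0 ^ (r m : ℕ))), by rwa [Function.update_of_ne hm.symm],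
        fun l hl => ?_⟩
      rcases eq_or_ne l m with rfl | hlm
      · rw [limitRepMat_update_apply hν β hm (hrc _).1 (hrc _).2, add_sub_cancel_left,
          mul_div_cancel₀ _ hslope, add_sub_cancel]
      · have hln : (l : ℕ) < n + 1 := lt_of_le_of_ne hl fun h => hlm (Fin.ext h)
        have hc : (c l : ℕ) < r l + m := (hrc l).1.trans_lt (Nat.add_lt_add_left hln _)
        rw [limitRepMat_update_of_lt β hc, hβ l (Nat.le_of_lt_succ hln)]
    · exact ⟨β, hβ₀, fun l _ => hβ l (by omega)⟩

lemma dimH_limitGroup (hν : IsMaxGap μ ν) (H : Subgroup ℂˣ) :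
    dimH (limitGroup μ ν H) = dimH {β : Fin k → ℂ | ∃ u ∈ H, (u : ℂ) = β 0} := by
  refine le_antisymm ((contDiff_limitRepMat μ ν).contDiffOn.dimH_image_le convex_univ
    (Set.subset_univ _)) ?_
  obtain ⟨r, c, hr₀, hrc⟩ := hν.exists_pivots
  refine (dimH_mono fun y hy => ?_).trans ((lipschitzWith_entries r c).dimH_image_le _)
  obtain ⟨u, hu, huy⟩ := hy
  obtain ⟨β, hβ₀, hβ⟩ := exists_limitRepMat_pivots_eq hν hr₀ hrc (huy ▸ u.ne_zero)
  exact ⟨_, ⟨β, ⟨u, hu, huy.trans hβ₀.symm⟩, rfl⟩, funext hβ⟩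

lemma dimH_limitGroup_top (hν : IsMaxGap μ ν) :
    dimH (limitGroup μ ν ⊤) = ((2 * k : ℕ) : ℝ≥0∞) := by
  rw [dimH_limitGroup hν, ← dimH_setOf_apply_ne_zero 0]
  congr 1 with β
  exact ⟨fun ⟨u, _, hu⟩ h => u.ne_zero (hu.trans h), fun hβ => ⟨Units.mk0 _ hβ, trivial, rfl⟩⟩

lemma dimH_limitGroup_bot (hν : IsMaxGap μ ν) :
    dimH (limitGroup μ ν ⊥) = ((2 * (k - 1) : ℕ) : ℝ≥0∞) := by
  rw [dimH_limitGroup hν, ← dimH_setOf_apply_eq 0 1]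
  congr 1 with β
  simp [Subgroup.mem_bot, eq_comm]

lemma limitGroup_mono {H K : Subgroup ℂˣ} (h : H ≤ K) : limitGroup μ ν H ⊆ limitGroup μ ν K :=
  Set.image_mono fun _ ⟨u, hu, huβ⟩ => ⟨u, h hu, huβ⟩

lemma apply_self_of_mem_limitGroup_bot (hν : IsMaxGap μ ν) {g : Fin k → Fin k → ℂ}
    (hg : g ∈ limitGroup μ ν ⊥) (i : Fin k) : g i i = 1 := by
  obtain ⟨β, ⟨u, hu, huβ⟩, rfl⟩ := hg
  rw [limitRepMat_apply_self hν, ← huβ, Subgroup.mem_bot.mp hu, Units.val_one, one_pow]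

lemma apply_eq_zero_of_mem_limitGroup (h : IsGapBound μ ν) {H : Subgroup ℂˣ}
    {g : Fin k → Fin k → ℂ} (hg : g ∈ limitGroup μ ν H) {i j : Fin k} (hij : j < i) :
    g i j = 0 := by
  obtain ⟨β, -, rfl⟩ := hg
  exact limitRepMat_apply_eq_zero_of_lt h β hij

end LimitGroupDimension

section LinearSubstitution

open MvPolynomial

variable {n k : ℕ} {R S : Type*} [CommRing R] [CommRing S]

/-- The action of an `n × n` matrix on the symmetric algebra of `R^n`, realised as linear
substitution `X i ↦ ∑ j, g j i • X j`. -/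
noncomputable def linSubst (g : Matrix (Fin n) (Fin n) R) :
    MvPolynomial (Fin n) R →ₐ[R] MvPolynomial (Fin n) R :=
  aeval fun i => ∑ j, g j i • X j

lemma linSubst_X (g : Matrix (Fin n) (Fin n) R) (i : Fin n) :
    linSubst g (X i) = ∑ j, g j i • X j :=
  aeval_X _ i

lemma linSubst_monomial (g : Matrix (Fin n) (Fin n) R) (d : Fin n →₀ ℕ) (c : R) :
    linSubst g (monomial d c) = C c * ∏ i, (∑ j, g j i • X j) ^ d i := by
  rw [linSubst, aeval_monomial, algebraMap_eq, Finsupp.prod_fintype _ _ fun _ => pow_zero _]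

lemma linSubst_mul (g h : Matrix (Fin n) (Fin n) R) :
    linSubst (g * h) = (linSubst g).comp (linSubst h) := by
  refine algHom_ext fun i => ?_
  simp only [AlgHom.comp_apply, linSubst_X, map_sum, map_smul, Matrix.mul_apply, Finset.sum_smul,
    Finset.smul_sum, smul_smul]
  rw [Finset.sum_comm]
  simp only [mul_comm]

lemma map_linSubst (φ : R →+* S) (g : Matrix (Fin n) (Fin n) R) (F : MvPolynomial (Fin n) R) :
    map φ (linSubst g F) = linSubst (g.map φ) (map φ F) := by
  induction F using MvPolynomial.induction_on with
  | C a => simp [linSubst]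
  | add p q hp hq => simp only [map_add, hp, hq]
  | mul_X p i hp => simp [hp, linSubst_X, smul_eq_C_mul]

lemma linSubst_diagonal_monomial (u : Fin n → R) (d : Fin n →₀ ℕ) (c : R) :
    linSubst (Matrix.diagonal u) (monomial d c) = monomial d ((∏ i, u i ^ d i) * c) := by
  have hX (i : Fin n) : ∑ j, Matrix.diagonal u j i • (X j : MvPolynomial (Fin n) R) =
      C (u i) * X i := by
    rw [Finset.sum_eq_single i fun j _ hj => by rw [Matrix.diagonal_apply_ne _ hj, zero_smul]] <;>
      simp [smul_eq_C_mul]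
  rw [linSubst_monomial]
  simp only [hX, mul_pow, Finset.prod_mul_distrib, monomial_eq, map_mul, map_prod, map_pow,
    Finsupp.prod_fintype d _ fun _ => pow_zero _]
  ring

lemma coeff_linSubst_diagonal (u : Fin n → R) (F : MvPolynomial (Fin n) R) (d : Fin n →₀ ℕ) :
    coeff d (linSubst (Matrix.diagonal u) F) = (∏ i, u i ^ d i) * coeff d F := by
  induction F using MvPolynomial.induction_on' with
  | monomial e c =>
    rw [linSubst_diagonal_monomial, coeff_monomial, coeff_monomial]
    split_ifs with h
    · rw [h]
    · rw [mul_zero]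
  | add p q hp hq => rw [map_add, coeff_add, coeff_add, hp, hq, mul_add]

lemma symMat_eq_coeff_linSubst (g : Matrix (Fin n) (Fin n) ℂ) (m m' : Mon n k) :
    symMat g m m' = coeff (Finsupp.equivFunOnFinite.symm m.1)
      (linSubst g (monomial (Finsupp.equivFunOnFinite.symm m'.1) 1)) := by
  rw [linSubst_monomial, C_1, one_mul]
  rfl

lemma symMat_diagonal_mul (u : Fin n → ℂ) (g : Matrix (Fin n) (Fin n) ℂ) (m m' : Mon n k) :
    symMat (Matrix.diagonal u * g) m m' = (∏ i, u i ^ m.1 i) * symMat g m m' := by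
  rw [symMat_eq_coeff_linSubst, linSubst_mul, AlgHom.comp_apply, coeff_linSubst_diagonal,
    ← symMat_eq_coeff_linSubst]
  rfl

lemma symMat_mul_diagonal (g : Matrix (Fin n) (Fin n) ℂ) (u : Fin n → ℂ) (m m' : Mon n k) :
    symMat (g * Matrix.diagonal u) m m' = symMat g m m' * ∏ i, u i ^ m'.1 i := by
  rw [symMat_eq_coeff_linSubst, linSubst_mul, AlgHom.comp_apply, linSubst_diagonal_monomial,
    ← smul_eq_mul, ← smul_monomial, map_smul, coeff_smul, ← symMat_eq_coeff_linSubst, smul_eq_mul,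
    mul_comm]
  rfl

lemma continuous_symMat (m m' : Mon n k) :
    Continuous fun g : Matrix (Fin n) (Fin n) ℂ => symMat g m m' := by
  have hgeneric (g : Matrix (Fin n) (Fin n) ℂ) : symMat g m m' =
      eval (fun p : Fin n × Fin n => g p.1 p.2) (coeff (Finsupp.equivFunOnFinite.symm m.1)
        (linSubst (Matrix.mvPolynomialX (Fin n) (Fin n) ℂ)
          (monomial (Finsupp.equivFunOnFinite.symm m'.1) 1))) := by
    have hmap : (Matrix.mvPolynomialX (Fin n) (Fin n) ℂ).map
        (eval fun p : Fin n × Fin n => g p.1 p.2) = g := Matrix.mvPolynomialX_mapMatrix_eval g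
    rw [← coeff_map, map_linSubst, hmap, map_monomial, map_one, symMat_eq_coeff_linSubst]
  simp only [hgeneric]
  exact (continuous_eval _).comp (continuous_pi fun p => continuous_id.matrix_elem p.1 p.2)

lemma sum_symMat_mul_coeff (g : Matrix (Fin n) (Fin n) ℂ) {F : MvPolynomial (Fin n) ℂ}
    (hF : ∀ d ∈ F.support, 0 < ∑ i, d i ∧ ∑ i, d i ≤ k) (m : Mon n k) :
    ∑ m' : Mon n k, symMat g m m' * coeff (Finsupp.equivFunOnFinite.symm m'.1) F =
      coeff (Finsupp.equivFunOnFinite.symm m.1) (linSubst g F) := by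
  have hexpand : F = ∑ m' : Mon n k, monomial (Finsupp.equivFunOnFinite.symm m'.1)
      (coeff (Finsupp.equivFunOnFinite.symm m'.1) F) := by
    conv_lhs => rw [F.as_sum]
    refine Finset.sum_bij_ne_zero (fun d hd _ => (⟨d, hF d hd⟩ : Mon n k))
      (fun _ _ _ => Finset.mem_univ _)
      (fun d _ _ e _ _ h => DFunLike.coe_injective (congrArg Subtype.val h))
      (fun m' _ hm' => ?_) (fun d _ _ => by rw [Finsupp.equivFunOnFinite_symm_coe])
    have hcoeff : coeff (Finsupp.equivFunOnFinite.symm m'.1) F ≠ 0 :=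
      fun h => hm' (by rw [h, map_zero])
    exact ⟨Finsupp.equivFunOnFinite.symm m'.1, mem_support_iff.mpr hcoeff, hm', rfl⟩
  conv_rhs => rw [hexpand, map_sum, coeff_sum]
  refine Finset.sum_congr rfl fun m' _ => ?_
  rw [← mul_one (coeff _ F), ← smul_eq_mul (coeff _ F), ← smul_monomial, map_smul, coeff_smul,
    ← symMat_eq_coeff_linSubst, smul_eq_mul, smul_eq_mul, mul_one, mul_comm]

end LinearSubstitution

section UniversalJet

open Polynomial

variable {k : ℕ}

lemma coeff_coeff_aeval_C_mul_X_pow {ι R : Type*} [Fintype ι] [CommRing R] (w : ι → ℕ)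
    (F : MvPolynomial ι R) (n : ℕ) (d : ι →₀ ℕ) :
    ((MvPolynomial.aeval (fun i => C (MvPolynomial.X i : MvPolynomial ι R) * X ^ w i) F).coeff
      n).coeff d = if ∑ i, w i * d i = n then F.coeff d else 0 := by
  classical
  induction F using MvPolynomial.induction_on' with
  | monomial e c =>
    have haeval : MvPolynomial.aeval (fun i => C (MvPolynomial.X i : MvPolynomial ι R) * X ^ w i)
        (MvPolynomial.monomial e c) = C (MvPolynomial.monomial e c) * X ^ ∑ i, w i * e i := by
      rw [MvPolynomial.aeval_monomial, MvPolynomial.monomial_eq,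
        Finsupp.prod_fintype _ _ fun _ => pow_zero _, Finsupp.prod_fintype _ _ fun _ => pow_zero _]
      simp only [mul_pow, ← pow_mul, Finset.prod_mul_distrib, Finset.prod_pow_eq_pow_sum, map_mul,
        map_prod, map_pow, mul_assoc]
      rfl
    rw [haeval, coeff_C_mul_X_pow, apply_ite (MvPolynomial.coeff d), MvPolynomial.coeff_monomial,
      MvPolynomial.coeff_zero]
    by_cases h : e = d
    · simp [h, eq_comm]
    · simp [h]
  | add p q hp hq =>
    rw [map_add, coeff_add, MvPolynomial.coeff_add, hp, hq, MvPolynomial.coeff_add]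
    split_ifs <;> simp

lemma coeff_coeff_jetPoly_X_pow (n l : ℕ) (d : Fin k →₀ ℕ) :
    ((jetPoly (MvPolynomial.X : Fin k → MvPolynomial (Fin k) ℂ) ^ n).coeff l).coeff d =
      if ∑ i : Fin k, ((i : ℕ) + 1) * d i = l ∧ ∑ i, d i = n then
        (Nat.multinomial Finset.univ d : ℂ) else 0 := by
  have haeval : jetPoly (MvPolynomial.X : Fin k → MvPolynomial (Fin k) ℂ) ^ n =
      MvPolynomial.aeval (fun i : Fin k => C (MvPolynomial.X i : MvPolynomial (Fin k) ℂ) *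
        X ^ ((i : ℕ) + 1)) ((∑ i, MvPolynomial.X i : MvPolynomial (Fin k) ℂ) ^ n) := by
    simp [jetPoly]
  rw [haeval, coeff_coeff_aeval_C_mul_X_pow, MvPolynomial.coeff_sum_X_pow_of_fintype,
    Finsupp.sum_fintype _ _ fun _ => rfl,
    Finsupp.multinomial_eq_of_support_subset (Finset.subset_univ _), ite_and, Nat.cast_ite,
    Nat.cast_zero]

lemma colPoly_one (j : Fin k) :
    colPoly (1 : Matrix (Fin k) (Fin k) ℂ) j =
      ∑ l : Fin k, (jetPoly MvPolynomial.X ^ ((l : ℕ) + 1)).coeff ((j : ℕ) + 1) := by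
  have hX (s : Fin k) : ∑ i, (1 : Matrix (Fin k) (Fin k) ℂ) i s • MvPolynomial.X i =
      (MvPolynomial.X s : MvPolynomial (Fin k) ℂ) := by
    simp [Matrix.one_apply]
  simp only [colPoly, hX, coeff_jetPoly_pow]

lemma coeff_colPoly_one (j : Fin k) (d : Fin k →₀ ℕ) :
    (colPoly (1 : Matrix (Fin k) (Fin k) ℂ) j).coeff d =
      if ∑ i : Fin k, ((i : ℕ) + 1) * d i = j + 1 ∧ 0 < ∑ i, d i ∧ ∑ i, d i ≤ k then
        (Nat.multinomial Finset.univ d : ℂ) else 0 := by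
  simp only [colPoly_one, MvPolynomial.coeff_sum, coeff_coeff_jetPoly_X_pow]
  by_cases hd : 0 < ∑ i, d i ∧ ∑ i, d i ≤ k
  · rw [Finset.sum_eq_single (⟨∑ i, d i - 1, by omega⟩ : Fin k)]
    · simp only [Nat.sub_add_cancel hd.1, hd, and_true]
    · exact fun l _ hl => if_neg fun h => hl (Fin.ext (by simp [h.2]))
    · simp
  · rw [if_neg fun h => hd h.2]
    exact Finset.sum_eq_zero fun l _ => if_neg fun h => hd (by omega)

lemma phiMat_one_apply (m : Mon k k) (j : Fin k) :
    phiMat (1 : Matrix (Fin k) (Fin k) ℂ) m j =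
      if ∑ i : Fin k, ((i : ℕ) + 1) * m.1 i = j + 1 then
        (Nat.multinomial Finset.univ m.1 : ℂ) else 0 := by
  have hm : 0 < ∑ i, m.1 i ∧ ∑ i, m.1 i ≤ k := m.2
  rw [phiMat, coeff_colPoly_one]
  simp only [Finsupp.coe_equivFunOnFinite_symm, hm, and_true]

lemma linSubst_repMat_coeff_jetPoly_X_pow (α : Fin k → ℂ) (n : ℕ) (j : Fin k) :
    linSubst (repMat k α) ((jetPoly MvPolynomial.X ^ (n + 1)).coeff ((j : ℕ) + 1)) =
      ∑ i, repMat k α i j • (jetPoly MvPolynomial.X ^ (n + 1)).coeff ((i : ℕ) + 1) := by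
  set φ : MvPolynomial (Fin k) ℂ →+* MvPolynomial (Fin k) ℂ := (linSubst (repMat k α)).toRingHom
  set E : (MvPolynomial (Fin k) ℂ)[X] := jetPoly MvPolynomial.X
  set f : (MvPolynomial (Fin k) ℂ)[X] := jetPoly fun s => MvPolynomial.C (α s)
  have hE : E.coeff 0 = 0 := coeff_zero_jetPoly _
  have hf : f.coeff 0 = 0 := coeff_zero_jetPoly _
  have hrep (i j : Fin k) : (f ^ ((i : ℕ) + 1)).coeff ((j : ℕ) + 1) =
      MvPolynomial.C (repMat k α i j) := by
    rw [repMat_eq_coeff, ← coeff_map, Polynomial.map_pow, map_jetPoly]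
  have hzero : (E.map φ).coeff 0 = (E.comp f).coeff 0 := by
    rw [coeff_map, hE, map_zero, coeff_comp_zero hE hf]
  have hcomp (l : Fin k) : (E.map φ).coeff ((l : ℕ) + 1) = (E.comp f).coeff ((l : ℕ) + 1) := by
    rw [coeff_map, coeff_comp_eq_sum hE hf, coeff_jetPoly]
    refine (linSubst_X _ l).trans (Finset.sum_congr rfl fun i _ => ?_)
    rw [coeff_jetPoly, hrep, MvPolynomial.smul_eq_C_mul, mul_comm]
  calc φ ((E ^ (n + 1)).coeff ((j : ℕ) + 1))
      = ((E.map φ) ^ (n + 1)).coeff ((j : ℕ) + 1) := by rw [← coeff_map, Polynomial.map_pow]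
    _ = ((E ^ (n + 1)).comp f).coeff ((j : ℕ) + 1) := by
      rw [coeff_pow_congr hzero hcomp, pow_comp]
    _ = ∑ i, repMat k α i j • (E ^ (n + 1)).coeff ((i : ℕ) + 1) := by
      rw [coeff_comp_eq_sum (coeff_pow_eq_zero_of_lt hE n.succ_pos) hf]
      simp only [hrep, MvPolynomial.smul_eq_C_mul, mul_comm]

lemma linSubst_repMat_colPoly_one (α : Fin k → ℂ) (j : Fin k) :
    linSubst (repMat k α) (colPoly 1 j) = ∑ i, repMat k α i j • colPoly 1 i := by
  simp only [colPoly_one, map_sum, linSubst_repMat_coeff_jetPoly_X_pow, Finset.smul_sum]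
  exact Finset.sum_comm

lemma sum_symMat_repMat_mul_phiMat_one (α : Fin k → ℂ) (m : Mon k k) (j : Fin k) :
    ∑ m' : Mon k k, symMat (repMat k α) m m' * phiMat 1 m' j =
      ∑ i, phiMat 1 m i * repMat k α i j := by
  have hsupp : ∀ d ∈ (colPoly (1 : Matrix (Fin k) (Fin k) ℂ) j).support,
      0 < ∑ i, d i ∧ ∑ i, d i ≤ k := fun d hd => by
    rw [MvPolynomial.mem_support_iff, coeff_colPoly_one] at hd
    exact (of_not_not fun h => hd (if_neg h)).2
  simp only [phiMat]
  rw [sum_symMat_mul_coeff _ hsupp, linSubst_repMat_colPoly_one, MvPolynomial.coeff_sum]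
  exact Finset.sum_congr rfl fun i _ => by rw [MvPolynomial.coeff_smul, smul_eq_mul, mul_comm]

end UniversalJet

section LimitPoint

open Filter Topology

variable {k : ℕ} {μ ν : Fin k → ℝ}

/-- Subadditivity of the weights `μ₁,…,μ_k`: a monomial of the tuple sum in degree `j` has
`μ`-weight at least `μ_j`. -/
def IsSubadditiveWeight (μ : Fin k → ℝ) : Prop :=
  ∀ (m : Fin k → ℕ) (j : Fin k), ∑ i : Fin k, ((i : ℕ) + 1) * m i = j + 1 →
    μ j ≤ ∑ i, μ i * m i

/-- The columns of `φ(1)`, whose wedge is `p_k`, moved by the diagonal matrix `t^μ` and normalised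
by dividing the `j`-th column by `t^{μ_j}`. -/
noncomputable def rescaledPhiMat (μ : Fin k → ℝ) (t : ℝ) : Matrix (Mon k k) (Fin k) ℂ :=
  fun m j => ((t ^ (∑ i, μ i * m.1 i - μ j) : ℝ) : ℂ) * phiMat 1 m j

open Classical in
/-- The limit of `rescaledPhiMat μ t` as `t → 0`; the wedge of its columns represents the limit
point `z_μ`. -/
noncomputable def limitPhiMat (μ : Fin k → ℝ) : Matrix (Mon k k) (Fin k) ℂ :=
  fun m j => if ∑ i : Fin k, ((i : ℕ) + 1) * m.1 i = j + 1 ∧ ∑ i, μ i * m.1 i = μ j then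
    (Nat.multinomial Finset.univ m.1 : ℂ) else 0

lemma tendsto_rescaledPhiMat_apply (hμ : IsSubadditiveWeight μ) (m : Mon k k) (j : Fin k) :
    Tendsto (fun t => rescaledPhiMat μ t m j) (𝓝[>] 0) (𝓝 (limitPhiMat μ m j)) := by
  simp only [rescaledPhiMat, limitPhiMat, phiMat_one_apply]
  by_cases hm : ∑ i : Fin k, ((i : ℕ) + 1) * m.1 i = j + 1
  · classical
    have hlim := (tendsto_ofReal_rpow_nhdsGT_zero (sub_nonneg.mpr (hμ m.1 j hm))).mul_const
      (Nat.multinomial Finset.univ m.1 : ℂ)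
    simpa only [hm, if_true, true_and, sub_eq_zero, ite_mul, one_mul, zero_mul] using hlim
  · simp only [hm, if_false, false_and, mul_zero, tendsto_const_nhds]

lemma rescaledRepMat_eq_diagonal_mul {t : ℝ} (ht : 0 < t) (β : Fin k → ℂ) :
    rescaledRepMat μ ν t β = Matrix.diagonal (fun i => ((t ^ μ i : ℝ) : ℂ)) *
      repMat k (fun l => ((t ^ ν l : ℝ) : ℂ) * β l) *
        Matrix.diagonal fun i => ((t ^ (-μ i) : ℝ) : ℂ) := by
  ext i j
  rw [Matrix.mul_diagonal, Matrix.diagonal_mul, rescaledRepMat, sub_eq_add_neg, Real.rpow_add ht,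
    Complex.ofReal_mul]
  ring

lemma prod_ofReal_rpow_pow {ι : Type*} [Fintype ι] {t : ℝ} (ht : 0 < t) (w : ι → ℝ) (m : ι → ℕ) :
    ∏ i, ((t ^ w i : ℝ) : ℂ) ^ m i = ((t ^ (∑ i, w i * m i) : ℝ) : ℂ) := by
  rw [Real.rpow_sum_of_pos ht, Complex.ofReal_prod]
  exact Finset.prod_congr rfl fun i _ => by
    rw [Real.rpow_mul ht.le, Real.rpow_natCast, Complex.ofReal_pow]

lemma symMat_rescaledRepMat {t : ℝ} (ht : 0 < t) (β : Fin k → ℂ) (m m' : Mon k k) :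
    symMat (rescaledRepMat μ ν t β) m m' =
      ((t ^ (∑ i, μ i * m.1 i - ∑ i, μ i * m'.1 i) : ℝ) : ℂ) *
        symMat (repMat k fun l => ((t ^ ν l : ℝ) : ℂ) * β l) m m' := by
  rw [rescaledRepMat_eq_diagonal_mul ht, symMat_mul_diagonal, symMat_diagonal_mul,
    prod_ofReal_rpow_pow ht, prod_ofReal_rpow_pow ht, sub_eq_add_neg, Real.rpow_add ht,
    Complex.ofReal_mul, ← Finset.sum_neg_distrib]
  simp only [neg_mul]
  ring

lemma sum_symMat_rescaledRepMat_mul_rescaledPhiMat {t : ℝ} (ht : 0 < t) (β : Fin k → ℂ)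
    (m : Mon k k) (j : Fin k) :
    ∑ m', symMat (rescaledRepMat μ ν t β) m m' * rescaledPhiMat μ t m' j =
      ∑ i, rescaledPhiMat μ t m i * rescaledRepMat μ ν t β i j := by
  have hsplit (a b c : ℝ) : ((t ^ (a - c) : ℝ) : ℂ) =
      ((t ^ (a - b) : ℝ) : ℂ) * ((t ^ (b - c) : ℝ) : ℂ) := by
    rw [← Complex.ofReal_mul, ← Real.rpow_add ht, sub_add_sub_cancel]
  let α : Fin k → ℂ := fun l => ((t ^ ν l : ℝ) : ℂ) * β l
  calc ∑ m', symMat (rescaledRepMat μ ν t β) m m' * rescaledPhiMat μ t m' j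
      = ((t ^ (∑ i, μ i * m.1 i - μ j) : ℝ) : ℂ) *
          ∑ m', symMat (repMat k α) m m' * phiMat 1 m' j := by
        rw [Finset.mul_sum]
        refine Finset.sum_congr rfl fun m' _ => ?_
        rw [symMat_rescaledRepMat ht, rescaledPhiMat,
          hsplit (∑ i, μ i * m.1 i) (∑ i, μ i * m'.1 i) (μ j)]
        ring
    _ = ((t ^ (∑ i, μ i * m.1 i - μ j) : ℝ) : ℂ) * ∑ i, phiMat 1 m i * repMat k α i j := by
        rw [sum_symMat_repMat_mul_phiMat_one]
    _ = ∑ i, rescaledPhiMat μ t m i * rescaledRepMat μ ν t β i j := by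
        rw [Finset.mul_sum]
        refine Finset.sum_congr rfl fun i _ => ?_
        rw [rescaledPhiMat, rescaledRepMat, hsplit (∑ i, μ i * m.1 i) (μ i) (μ j)]
        ring

lemma sum_symMat_limitRepMat_mul_limitPhiMat (hμ : IsSubadditiveWeight μ) (hν : IsGapBound μ ν)
    (β : Fin k → ℂ) (m : Mon k k) (j : Fin k) :
    ∑ m', symMat (limitRepMat μ ν β) m m' * limitPhiMat μ m' j =
      ∑ i, limitPhiMat μ m i * limitRepMat μ ν β i j := by
  have hsym (m' : Mon k k) : Tendsto (fun t => symMat (rescaledRepMat μ ν t β) m m') (𝓝[>] 0)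
      (𝓝 (symMat (limitRepMat μ ν β) m m')) :=
    ((continuous_symMat m m').tendsto _).comp (tendsto_rescaledRepMat hν tendsto_const_nhds)
  exact tendsto_nhds_unique_of_eventuallyEq
    (tendsto_finsetSum _ fun m' _ => (hsym m').mul (tendsto_rescaledPhiMat_apply hμ m' j))
    (tendsto_finsetSum _ fun i _ =>
      (tendsto_rescaledPhiMat_apply hμ m i).mul (tendsto_rescaledRepMat_apply hν β i j))
    (eventually_mem_nhdsWithin.mono fun t ht =>
      sum_symMat_rescaledRepMat_mul_rescaledPhiMat ht β m j)

lemma wedge_eq_det {n : ℕ} (v : Fin k → Mon n k → ℂ) (mf : Fin k → Mon n k) :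
    wedge v mf = (Matrix.of fun a b => v a (mf b)).det := by
  rw [Matrix.det_apply']
  rfl

lemma actV_wedge {n : ℕ} (g : Matrix (Fin n) (Fin n) ℂ) (v : Fin k → Mon n k → ℂ) :
    actV g (wedge v) = wedge fun j m => ∑ m', symMat g m m' * v j m' := by
  ext mf
  simp only [actV, wedge, Finset.mul_sum]
  rw [Finset.sum_comm]
  refine Finset.sum_congr rfl fun τ _ => ?_
  rw [Fintype.prod_sum, Finset.mul_sum]
  refine Finset.sum_congr rfl fun mf' _ => ?_
  rw [Finset.prod_mul_distrib]
  ring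

lemma actV_wedge_eq_det_smul {n : ℕ} {g : Matrix (Fin n) (Fin n) ℂ} {v : Fin k → Mon n k → ℂ}
    {A : Matrix (Fin k) (Fin k) ℂ}
    (h : ∀ m j, ∑ m', symMat g m m' * v j m' = ∑ i, v i m * A i j) :
    actV g (wedge v) = A.det • wedge v := by
  ext mf
  rw [actV_wedge, Pi.smul_apply, wedge_eq_det, wedge_eq_det, smul_eq_mul, ← A.det_transpose,
    ← Matrix.det_mul]
  congr 1 with a b
  simp only [h, Matrix.of_apply, Matrix.mul_apply, Matrix.transpose_apply]
  exact Finset.sum_congr rfl fun i _ => mul_comm _ _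

lemma exists_actV_eq_smul_of_mem_limitGroup [NeZero k] (hμ : IsSubadditiveWeight μ)
    (hν : IsMaxGap μ ν) {H : Subgroup ℂˣ} {g : Fin k → Fin k → ℂ} (hg : g ∈ limitGroup μ ν H) :
    ∃ c : ℂ, c ≠ 0 ∧ actV (Matrix.of g) (wedge fun j m => limitPhiMat μ m j) =
      c • wedge fun j m => limitPhiMat μ m j := by
  have hunit := isUnit_of_mem_limitGroup hν hg
  obtain ⟨β, -, rfl⟩ := hg
  exact ⟨_, ((Matrix.isUnit_iff_isUnit_det _).mp hunit).ne_zero,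
    actV_wedge_eq_det_smul (sum_symMat_limitRepMat_mul_limitPhiMat hμ hν.isGapBound β)⟩

end LimitPoint

section FloorWeights

variable {k σ : ℕ} {ε : ℝ}

lemma sum_lamS_mul (k : ℕ) (ε : ℝ) (σ : ℕ) (m : Fin k → ℕ) :
    ∑ i, lamS k ε σ i * m i = ((∑ i : Fin k, ((i : ℕ) + 1) * m i : ℕ) : ℝ) -
      ((∑ i : Fin k, ((i : ℕ) + 1) / σ * m i : ℕ) : ℝ) * ε := by
  rw [Nat.cast_sum, Nat.cast_sum, Finset.sum_mul, ← Finset.sum_sub_distrib]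
  exact Finset.sum_congr rfl fun i _ => by
    rw [lamS, lamW, Nat.cast_mul, Nat.cast_mul]
    ring

lemma sum_div_mul_le_div {ι : Type*} [Fintype ι] (σ : ℕ) (a m : ι → ℕ) :
    ∑ i, a i / σ * m i ≤ (∑ i, a i * m i) / σ := by
  rcases σ.eq_zero_or_pos with rfl | hσ
  · simp
  rw [Nat.le_div_iff_mul_le hσ, Finset.sum_mul]
  refine Finset.sum_le_sum fun i _ => ?_
  rw [mul_right_comm]
  exact Nat.mul_le_mul_right _ (Nat.div_mul_le_self _ _)

lemma isSubadditiveWeight_lamS (hε : 0 ≤ ε) : IsSubadditiveWeight (lamS k ε σ) := by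
  intro m j hm
  have hfloor := sum_div_mul_le_div σ (fun i : Fin k => (i : ℕ) + 1) m
  rw [sum_lamS_mul, hm, lamS, lamW]
  rw [hm] at hfloor
  gcongr

lemma isMaxGap_lamS (k : ℕ) (ε : ℝ) (σ : ℕ) :
    IsMaxGap (lamS k ε σ) fun l => nmax k ε σ ((l : ℕ) + 1) := by
  refine fun l => ⟨?_, ?_⟩
  · obtain ⟨j, hj, hmax⟩ := Finset.exists_mem_eq_sup' (s := Finset.Icc 1 (k - ((l : ℕ) + 1) + 1))
      ⟨1, Finset.mem_Icc.mpr (by omega)⟩ fun j => lamW ε σ (j + (l + 1) - 1) - lamW ε σ j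
    rw [Finset.mem_Icc] at hj
    refine ⟨⟨j - 1, by omega⟩, ⟨j - 1 + l, by omega⟩, rfl, hmax.trans ?_⟩
    simp only [lamS, Nat.sub_add_cancel hj.1, show j - 1 + l + 1 = j + (l + 1) - 1 by omega]
  · rintro _ ⟨i, j, hij, rfl⟩
    have hmem : (i : ℕ) + 1 ∈ Finset.Icc 1 (k - ((l : ℕ) + 1) + 1) :=
      Finset.mem_Icc.mpr (by omega)
    refine le_trans (le_of_eq ?_) (Finset.le_sup'
      (fun j => lamW ε σ (j + ((l : ℕ) + 1) - 1) - lamW ε σ j) hmem)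
    simp only [lamS, show (i : ℕ) + 1 + (l + 1) - 1 = j + 1 by omega]

lemma limitPhiMat_lamS_apply (hε : ε ≠ 0) (m : Mon k k) (j : Fin k) :
    limitPhiMat (lamS k ε σ) m j = zLamPart k σ ((j : ℕ) + 1) m := by
  rw [limitPhiMat, zLamPart, sum_lamS_mul, lamS, lamW]
  refine ite_congr (propext (and_congr_right fun hm => ?_)) (fun _ => rfl) fun _ => rfl
  rw [hm, sub_right_inj, mul_left_inj' hε, Nat.cast_inj]

lemma wedge_limitPhiMat_lamS (hε : ε ≠ 0) :
    (wedge fun j m => limitPhiMat (lamS k ε σ) m j) = zLamVec k σ := by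
  simp only [limitPhiMat_lamS_apply hε, zLamVec]

end FloorWeights

theorem limit_stabiliser_group_general {k : ℕ} [NeZero k] {μ ν : Fin k → ℝ}
    (hμ : IsSubadditiveWeight μ) (hν : IsMaxGap μ ν) :
    ∃ Glim : (Fin k → ℂ) → (Fin k → Fin k → ℂ),
      (∀ β : Fin k → ℂ,
        Filter.Tendsto (fun t : ℝ => (fun i j : Fin k => rescaledRepMat μ ν t β i j))
          (nhdsWithin 0 (Set.Ioi 0)) (nhds (Glim β))) ∧
      ∃ S : Set (Fin k → Fin k → ℂ),
        S = {g | ∃ β : Fin k → ℂ, (∀ i : Fin k, (i : ℕ) = 0 → β i ≠ 0) ∧ g = Glim β} ∧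
        (∀ g ∈ S, IsUnit (Matrix.of g)) ∧
        idFun k ∈ S ∧
        (∀ g ∈ S, ∀ h ∈ S, (fun i j => (Matrix.of g * Matrix.of h) i j) ∈ S) ∧
        (∀ g ∈ S, (fun i j => (Matrix.of g)⁻¹ i j) ∈ S) ∧
        dimH S = ((2 * k : ℕ) : ℝ≥0∞) ∧
        (∀ g ∈ S, ∃ c : ℂ, c ≠ 0 ∧
          actV (Matrix.of g) (wedge fun j m => limitPhiMat μ m j) =
            c • wedge fun j m => limitPhiMat μ m j) ∧
        ∃ S' : Set (Fin k → Fin k → ℂ), S' ⊆ S ∧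
          (∀ g ∈ S', (∀ i : Fin k, g i i = 1) ∧ ∀ i j : Fin k, j < i → g i j = 0) ∧
          idFun k ∈ S' ∧
          (∀ g ∈ S', ∀ h ∈ S', (fun i j => (Matrix.of g * Matrix.of h) i j) ∈ S') ∧
          (∀ g ∈ S', (fun i j => (Matrix.of g)⁻¹ i j) ∈ S') ∧
          dimH S' = ((2 * (k - 1) : ℕ) : ℝ≥0∞) :=
  ⟨limitRepMat μ ν, fun _ => tendsto_rescaledRepMat hν.isGapBound tendsto_const_nhds,
    limitGroup μ ν ⊤, limitGroup_top_eq μ ν,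
    fun _ => isUnit_of_mem_limitGroup hν,
    idFun_mem_limitGroup hν,
    fun _ hg _ hh => mul_mem_limitGroup hν hg hh,
    fun _ => inv_mem_limitGroup hν,
    dimH_limitGroup_top hν,
    fun _ => exists_actV_eq_smul_of_mem_limitGroup hμ hν,
    limitGroup μ ν ⊥, limitGroup_mono bot_le,
    fun _ hg => ⟨apply_self_of_mem_limitGroup_bot hν hg,
      fun _ _ => apply_eq_zero_of_mem_limitGroup hν.isGapBound hg⟩,
    idFun_mem_limitGroup hν,
    fun _ hg _ hh => mul_mem_limitGroup hν hg hh,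
    fun _ => inv_mem_limitGroup hν,
    dimH_limitGroup_bot hν⟩

/-- For `ε` small enough and `2 ≤ σ ≤ k`: the entrywise limit
`G^σ = lim_{t→0} G_{λ^σ(t)z}` exists; the set `G^σ` (the image of `{β : β₁ ≠ 0}` under
the limit) is a subgroup of `GL(k,ℂ)` of complex dimension `k` (Hausdorff dimension
`2k`), contained in the stabiliser of the projective point `z_{λ^σ}`, and it contains a
subgroup of complex dimension `k−1` consisting of upper triangular unipotent matrices. -/
theorem limit_stabiliser_group (k : ℕ) (hk : 1 ≤ k) :
    ∃ ε₀ : ℝ, 0 < ε₀ ∧ ε₀ ≤ 1 ∧ ∀ ε : ℝ, 0 < ε → ε < ε₀ → ∀ σ : ℕ, 2 ≤ σ → σ ≤ k →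
      ∃ Glim : (Fin k → ℂ) → (Fin k → Fin k → ℂ),
        -- the entrywise limit exists
        (∀ β : Fin k → ℂ,
          Filter.Tendsto (fun t : ℝ => (fun i j : Fin k => Gent k ε σ t β i j))
            (nhdsWithin 0 (Set.Ioi 0)) (nhds (Glim β))) ∧
        ∃ S : Set (Fin k → Fin k → ℂ),
          S = {g | ∃ β : Fin k → ℂ, (∀ i : Fin k, (i : ℕ) = 0 → β i ≠ 0) ∧ g = Glim β} ∧
          -- S is a subgroup of GL(k,ℂ) …
          (∀ g ∈ S, IsUnit (Matrix.of g)) ∧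
          idFun k ∈ S ∧
          (∀ g ∈ S, ∀ h ∈ S, (fun i j => (Matrix.of g * Matrix.of h) i j) ∈ S) ∧
          (∀ g ∈ S, (fun i j => (Matrix.of g)⁻¹ i j) ∈ S) ∧
          -- … of complex dimension k …
          dimH S = ((2 * k : ℕ) : ℝ≥0∞) ∧
          -- … contained in the stabiliser of the projective point z_{λ^σ}
          (∀ g ∈ S, ∃ c : ℂ, c ≠ 0 ∧
            actV (Matrix.of g) (zLamVec k σ) = c • zLamVec k σ) ∧
          -- and S contains a (k−1)-dimensional subgroup of the standard maximal
          -- unipotent subgroup of SL(k,ℂ)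
          ∃ S' : Set (Fin k → Fin k → ℂ), S' ⊆ S ∧
            (∀ g ∈ S', (∀ i : Fin k, g i i = 1) ∧ ∀ i j : Fin k, j < i → g i j = 0) ∧
            idFun k ∈ S' ∧
            (∀ g ∈ S', ∀ h ∈ S', (fun i j => (Matrix.of g * Matrix.of h) i j) ∈ S') ∧
            (∀ g ∈ S', (fun i j => (Matrix.of g)⁻¹ i j) ∈ S') ∧
            dimH S' = ((2 * (k - 1) : ℕ) : ℝ≥0∞) := by
  have : NeZero k := ⟨Nat.one_le_iff_ne_zero.mp hk⟩
  refine ⟨1, one_pos, le_rfl, fun ε hε _ σ _ _ => ?_⟩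
  rw [← wedge_limitPhiMat_lamS hε.ne']
  exact limit_stabiliser_group_general (isSubadditiveWeight_lamS hε.le) (isMaxGap_lamS k ε σ)

end JetPaper
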